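/- arXiv:1908.00649 — 2 statements merged into one kernel-verified Lean document; each statement's English description precedes it below -/
import Mathlib

section
/- Let G be a Grothendieck category, E an injective cogenerator of G, and P a finitely presented object. The following are equivalent: (1) Ext¹(P,-) : G → Ab preserves direct limits; (2) Ext¹(P,-) vanishes on direct limits of objects in Prod(E); (3) Ext¹(P,-) vanishes on direct limits of injective objects. -/
/-!
STATEMENT 4: Let `G` be a Grothendieck category, `E` an injective cogenerator
of `G`, and `P` a finitely presented object.  The following are equivalent:
(1) `Ext¹(P,-) : G → Ab` preserves direct limits;
(2) `Ext¹(P,-)` vanishes on direct limits of objects in `Prod(E)`;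
(3) `Ext¹(P,-)` vanishes on direct limits of injective objects.

"`Ext¹(P,-)` preserves direct limits" is encoded element-wise: for every
filtered system `(Y_i)` with colimit `Y`, the canonical map
`colim Ext¹(P,Y_i) → Ext¹(P,Y)` is bijective, i.e. every class over `Y` comes
from some stage and every class dying in `Y` dies at some later stage.
-/

open CategoryTheory Limits Opposite Abelian

universe w v u

variable {C : Type u} [Category.{v} C]

/-- `Hom(X, -)` preserves filtered colimits. -/
def FinitelyPresented (X : C) : Prop :=
  ∀ (J : Type v) [SmallCategory J] [IsFiltered J] (D : J ⥤ C) (c : Cocone D),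
    Nonempty (IsColimit c) →
      Nonempty (IsColimit ((coyoneda.obj (op X)).mapCocone c))

/-- `X` is a direct summand of a product of copies of `E`. -/
def InProdClass [HasLimits C] (E X : C) : Prop :=
  ∃ (ι : Type v) (s : X ⟶ ∏ᶜ (fun _ : ι => E)) (r : (∏ᶜ (fun _ : ι => E)) ⟶ X),
    s ≫ r = 𝟙 X

section
variable [Abelian C] [HasExt.{w} C]

/-- The canonical map `colim Ext¹(P, Y_i) → Ext¹(P, colim Y_i)` is bijective for
every filtered system, expressed element-wise. -/
def Ext1PreservesDirectLimits (P : C) : Prop :=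
  ∀ (J : Type v) [SmallCategory J] [IsFiltered J] (D : J ⥤ C)
    (c : Cocone D), IsColimit c →
    ((∀ (i : J) (e : Ext P (D.obj i) 1),
        e.comp (Ext.mk₀ (c.ι.app i)) (add_zero 1) = 0 →
        ∃ (j : J) (φ : i ⟶ j), e.comp (Ext.mk₀ (D.map φ)) (add_zero 1) = 0) ∧
      (∀ e : Ext P c.pt 1, ∃ (i : J) (e' : Ext P (D.obj i) 1),
        e'.comp (Ext.mk₀ (c.ι.app i)) (add_zero 1) = e))

/-- `Ext¹(P,-)` vanishes on direct limits of objects satisfying `Q`. -/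
def Ext1VanishesOnDirectLimitsOf (Q : C → Prop) (P : C) : Prop :=
  ∀ (J : Type v) [SmallCategory J] [IsFiltered J] (D : J ⥤ C),
    (∀ j : J, Q (D.obj j)) →
    ∀ (c : Cocone D), IsColimit c →
    ∀ e : Ext P c.pt 1, e = 0

end

/-- The functor sending `X` to the product of copies of `E` indexed by `X ⟶ E`. -/
noncomputable def homPower [HasLimits C] (E : C) : C ⥤ C where
  obj X := ∏ᶜ fun _ : X ⟶ E => E
  map f := Pi.lift fun h => Pi.π (fun _ => E) (f ≫ h)

/-- The canonical natural transformation from the identity to `homPower E`. -/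
noncomputable def toHomPower [HasLimits C] (E : C) : 𝟭 C ⟶ homPower E where
  app X := Pi.lift fun h => h
  naturality X Y f := Pi.hom_ext _ _ fun h => by simp [homPower]

lemma inProdClass_homPower_obj [HasLimits C] (E X : C) :
    InProdClass E ((homPower E).obj X) :=
  ⟨X ⟶ E, 𝟙 _, 𝟙 _, Category.id_comp _⟩

lemma InProdClass.injective [HasLimits C] {E X : C} (hE : Injective E)
    (h : InProdClass E X) : Injective X := by
  obtain ⟨ι, s, r, hsr⟩ := h
  exact Retract.injective ⟨s, r, hsr⟩

namespace FinitelyPresented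

variable {P : C} (hP : FinitelyPresented P) {J : Type v} [SmallCategory J] [IsFiltered J]
  {D : J ⥤ C} {c : Cocone D} (hc : IsColimit c)

include hP hc

lemma exists_fac (f : P ⟶ c.pt) : ∃ (i : J) (g : P ⟶ D.obj i), g ≫ c.ι.app i = f :=
  Types.jointly_surjective _ (hP J D c ⟨hc⟩).some f

lemma exists_comp_map_eq {i j : J} (f : P ⟶ D.obj i) (g : P ⟶ D.obj j)
    (h : f ≫ c.ι.app i = g ≫ c.ι.app j) :
    ∃ (k : J) (a : i ⟶ k) (b : j ⟶ k), f ≫ D.map a = g ≫ D.map b :=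
  (Types.FilteredColimit.isColimit_eq_iff _ (hP J D c ⟨hc⟩).some).1 h

end FinitelyPresented

/-- The morphism from the value at `i` of a short complex of functors to its colimit. -/
noncomputable def evaluationToColim [Preadditive C] [HasColimits C] {J : Type v} [SmallCategory J]
    (S : ShortComplex (J ⥤ C)) (i : J) : S.map ((evaluation J C).obj i) ⟶ S.map colim where
  τ₁ := colimit.ι S.X₁ i
  τ₂ := colimit.ι S.X₂ i
  τ₃ := colimit.ι S.X₃ i
  comm₁₂ := ι_colimMap S.f i
  comm₂₃ := ι_colimMap S.g i

/-- The transition morphism between two values of a short complex of functors. -/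
def evaluationMap [Preadditive C] {J : Type v} [SmallCategory J]
    (S : ShortComplex (J ⥤ C)) {i j : J} (a : i ⟶ j) :
    S.map ((evaluation J C).obj i) ⟶ S.map ((evaluation J C).obj j) where
  τ₁ := S.X₁.map a
  τ₂ := S.X₂.map a
  τ₃ := S.X₃.map a
  comm₁₂ := S.f.naturality a
  comm₂₃ := S.g.naturality a

section

variable [Abelian C] [HasExt.{w} C]

lemma mk₀_comp_extClass_comp_mk₀ {P : C} {S₁ S₂ : ShortComplex C} (h₁ : S₁.ShortExact)
    (h₂ : S₂.ShortExact) (φ : S₁ ⟶ S₂) (x : P ⟶ S₁.X₃) :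
    ((Ext.mk₀ x).comp h₁.extClass (zero_add 1)).comp (Ext.mk₀ φ.τ₁) (add_zero 1) =
      (Ext.mk₀ (x ≫ φ.τ₃)).comp h₂.extClass (zero_add 1) := by
  rw [Ext.comp_assoc_of_third_deg_zero, ShortComplex.ShortExact.extClass_naturality h₁ h₂ φ,
    Ext.mk₀_comp_mk₀_assoc]

lemma exists_mk₀_comp_extClass_eq {P : C} {S : ShortComplex C} (hS : S.ShortExact)
    (hvan : ∀ e : Ext P S.X₂ 1, e = 0) (e : Ext P S.X₁ 1) :
    ∃ f : P ⟶ S.X₃, (Ext.mk₀ f).comp hS.extClass (zero_add 1) = e := by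
  obtain ⟨x, hx⟩ := Ext.covariant_sequence_exact₁ P hS e (hvan _) (zero_add 1)
  obtain ⟨f, rfl⟩ := (Ext.mk₀_bijective _ _).2 x
  exact ⟨f, hx⟩

lemma mk₀_comp_extClass_eq_zero_iff {P : C} {S : ShortComplex C} (hS : S.ShortExact)
    (f : P ⟶ S.X₃) :
    (Ext.mk₀ f).comp hS.extClass (zero_add 1) = 0 ↔ ∃ g : P ⟶ S.X₂, g ≫ S.g = f := by
  constructor
  · intro h
    obtain ⟨y, hy⟩ := Ext.covariant_sequence_exact₃ P hS (Ext.mk₀ f) (zero_add 1) h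
    obtain ⟨g, rfl⟩ := (Ext.mk₀_bijective _ _).2 y
    exact ⟨g, (Ext.mk₀_bijective _ _).1 (by simpa using hy)⟩
  · rintro ⟨g, rfl⟩
    rw [← Ext.mk₀_comp_mk₀, Ext.comp_assoc_of_second_deg_zero, hS.comp_extClass, Ext.comp_zero]

section

variable [HasColimits C] [AB5 C] {P : C} (hP : FinitelyPresented P)
  {J : Type v} [SmallCategory J] [IsFiltered J] {S : ShortComplex (J ⥤ C)} (hS : S.ShortExact)

include hP hS

/-- Surjectivity of `colim Ext¹(P, S.X₁) → Ext¹(P, colim S.X₁)` when `Ext¹(P, colim S.X₂)`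
vanishes. -/
lemma exists_ext_comp_colimit_ι_eq (hvan : ∀ e : Ext P (colimit S.X₂) 1, e = 0)
    (e : Ext P (colimit S.X₁) 1) :
    ∃ (i : J) (e' : Ext P (S.X₁.obj i) 1),
      e'.comp (Ext.mk₀ (colimit.ι S.X₁ i)) (add_zero 1) = e := by
  have hc : (S.map colim).ShortExact := hS.map_of_exact colim
  obtain ⟨f, rfl⟩ := exists_mk₀_comp_extClass_eq hc hvan e
  obtain ⟨i, g, rfl⟩ := hP.exists_fac (colimit.isColimit S.X₃) f
  have hi : (S.map ((evaluation J C).obj i)).ShortExact := hS.map_of_exact _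
  exact ⟨i, (Ext.mk₀ g).comp hi.extClass (zero_add 1),
    mk₀_comp_extClass_comp_mk₀ hi hc (evaluationToColim S i) g⟩

/-- Injectivity of `colim Ext¹(P, S.X₁) → Ext¹(P, colim S.X₁)` when each `Ext¹(P, S.X₂.obj i)`
vanishes. -/
lemma exists_ext_comp_map_eq_zero {i : J} (hvan : ∀ e : Ext P (S.X₂.obj i) 1, e = 0)
    (e : Ext P (S.X₁.obj i) 1)
    (he : e.comp (Ext.mk₀ (colimit.ι S.X₁ i)) (add_zero 1) = 0) :
    ∃ (j : J) (φ : i ⟶ j), e.comp (Ext.mk₀ (S.X₁.map φ)) (add_zero 1) = 0 := by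
  have hc : (S.map colim).ShortExact := hS.map_of_exact colim
  have hev (j : J) : (S.map ((evaluation J C).obj j)).ShortExact := hS.map_of_exact _
  obtain ⟨f, rfl⟩ := exists_mk₀_comp_extClass_eq (hev i) hvan e
  obtain ⟨g, hg⟩ := (mk₀_comp_extClass_eq_zero_iff hc _).1
    ((mk₀_comp_extClass_comp_mk₀ (hev i) hc (evaluationToColim S i) f).symm.trans he)
  obtain ⟨j, g, rfl⟩ := hP.exists_fac (colimit.isColimit S.X₂) g
  obtain ⟨k, a, b, h⟩ := hP.exists_comp_map_eq (colimit.isColimit S.X₃) (g ≫ S.g.app j) f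
    ((Category.assoc _ _ _).trans <| (g ≫= (evaluationToColim S j).comm₂₃).symm.trans <|
      (Category.assoc _ _ _).symm.trans hg)
  refine ⟨k, b, (mk₀_comp_extClass_comp_mk₀ (hev i) (hev k) (evaluationMap S b) f).trans
    ((mk₀_comp_extClass_eq_zero_iff (hev k) _).2 ⟨g ≫ S.X₂.map a, ?_⟩)⟩
  exact (Category.assoc _ _ _).trans <| (g ≫= S.g.naturality a).trans <|
    (Category.assoc _ _ _).symm.trans h

end

/-- If `Ext¹(P, -)` vanishes on direct limits of objects satisfying `Q`, and every object
embeds functorially into an `Ext¹(P, -)`-acyclic object satisfying `Q`, then `Ext¹(P, -)`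
preserves direct limits. -/
lemma ext1PreservesDirectLimits_of_vanishes [HasColimits C] [AB5 C] {P : C}
    (hP : FinitelyPresented P) {Q : C → Prop} (F : C ⥤ C) (η : 𝟭 C ⟶ F) (hη : ∀ X, Mono (η.app X))
    (hF : ∀ X, Q (F.obj X)) (hacyc : ∀ (X : C) (e : Ext P (F.obj X) 1), e = 0)
    (hvan : Ext1VanishesOnDirectLimitsOf.{w} Q P) :
    Ext1PreservesDirectLimits.{w} P := by
  intro J _ _ D c hc
  have (j : J) : Mono ((Functor.whiskerLeft D η).app j) := hη (D.obj j)
  have : Mono (Functor.whiskerLeft D η) := NatTrans.mono_of_mono_app _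
  let S : ShortComplex (J ⥤ C) := .mk (Functor.whiskerLeft D η)
    (cokernel.π (Functor.whiskerLeft D η)) (cokernel.condition _)
  have hS : S.ShortExact :=
    { exact := S.exact_of_g_is_cokernel (cokernelIsCokernel _)
      mono_f := this
      epi_g := inferInstanceAs (Epi (cokernel.π _)) }
  let α : c.pt ≅ colimit D := hc.coconePointUniqueUpToIso (colimit.isColimit D)
  have hα (i : J) : c.ι.app i ≫ α.hom = colimit.ι D i :=
    hc.comp_coconePointUniqueUpToIso_hom (colimit.isColimit D) i
  refine ⟨fun i e he => exists_ext_comp_map_eq_zero hP hS (hacyc (D.obj i)) e ?_, fun e => ?_⟩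
  · change e.comp (Ext.mk₀ (colimit.ι D i)) (add_zero 1) = 0
    rw [← hα, ← Ext.mk₀_comp_mk₀, ← Ext.comp_assoc_of_third_deg_zero, he, Ext.zero_comp]
  · obtain ⟨i, e', he'⟩ := exists_ext_comp_colimit_ι_eq hP hS
      (hvan J (D ⋙ F) (fun j => hF _) _ (colimit.isColimit _))
      (e.comp (Ext.mk₀ α.hom) (add_zero 1))
    refine ⟨i, e', ?_⟩
    have h : colimit.ι D i ≫ α.inv = c.ι.app i := α.comp_inv_eq.2 (hα i).symm
    rw [← h, ← Ext.mk₀_comp_mk₀, ← Ext.comp_assoc_of_third_deg_zero]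
    refine (congrArg (fun x => Ext.comp x (Ext.mk₀ α.inv) (add_zero 1)) he').trans ?_
    simp

end

theorem ext1_preserves_directLimits_tfae
    [Abelian C] [HasColimits C] [HasLimits C] [AB5 C] [HasExt.{w} C]
    (hsep : ∃ G : C, IsSeparator G)
    (E : C) (hEinj : CategoryTheory.Injective E) (hEcog : IsCoseparator E)
    (P : C) (hP : FinitelyPresented P) :
    List.TFAE
      [ Ext1PreservesDirectLimits.{w} P,
        Ext1VanishesOnDirectLimitsOf.{w} (InProdClass E) P,
        Ext1VanishesOnDirectLimitsOf.{w} (fun X => CategoryTheory.Injective X) P ] := by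
  tfae_have 1 → 3 := by
    intro h J _ _ D hD c hc e
    obtain ⟨i, e', rfl⟩ := (h J D c hc).2 e
    have : Injective (D.obj i) := hD i
    rw [e'.eq_zero_of_injective, Ext.zero_comp]
  tfae_have 3 → 2 := fun h J _ _ D hD => h J D fun j => (hD j).injective hEinj
  tfae_have 2 → 1 := by
    refine ext1PreservesDirectLimits_of_vanishes hP (homPower E) (toHomPower E)
      ((isCoseparator_iff_mono E).1 hEcog) (inProdClass_homPower_obj E) fun X e => ?_
    have := (inProdClass_homPower_obj E X).injective hEinj
    exact e.eq_zero_of_injective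
  tfae_finish
end

section
/- Let G be a Grothendieck category and t = (T, F) a torsion pair of finite type in G. If M is an object such that (i) Hom(M,-) preserves direct limits of objects in T, (ii) Hom(M,-) restricted to F preserves direct limits, and (iii) for each direct system (T_i) in T the canonical map colim Ext¹(M,T_i) → Ext¹(M, colim T_i) is a monomorphism, then M is finitely presented. -/
/-!
STATEMENT 8: Let `G` be a Grothendieck category and `t = (T, F)` a torsion
pair of finite type in `G`.  If `M` is an object such that
(i) `Hom(M,-)` preserves direct limits of objects in `T`,
(ii) `Hom(M,-)` restricted to `F` preserves direct limits, and
(iii) for each direct system `(T_i)` in `T` the canonical map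
`colim Ext¹(M,T_i) → Ext¹(M, colim T_i)` is a monomorphism (encoded
element-wise), then `M` is finitely presented.
-/

open CategoryTheory Limits Opposite Abelian

universe w v u

variable {C : Type u} [Category.{v} C]

/-- A torsion pair on an abelian category, as a pair of classes of objects. -/
structure IsTorsionPair [Abelian C] (T F : C → Prop) : Prop where
  torsion_iff : ∀ X : C, T X ↔ ∀ (Y : C), F Y → ∀ f : X ⟶ Y, f = 0
  torsionFree_iff : ∀ Y : C, F Y ↔ ∀ (X : C), T X → ∀ f : X ⟶ Y, f = 0
  exists_seq : ∀ X : C, ∃ (A B : C) (i : A ⟶ X) (p : X ⟶ B) (w : i ≫ p = 0),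
    T A ∧ F B ∧ (ShortComplex.mk i p w).ShortExact

/-- A class of objects is closed under direct (filtered) limits. -/
def ClosedUnderDirectLimits (P : C → Prop) : Prop :=
  ∀ (J : Type v) [SmallCategory J] [IsFiltered J] (D : J ⥤ C),
    (∀ j : J, P (D.obj j)) →
    ∀ (c : Cocone D), IsColimit c → P c.pt

/-- `Hom(X,-)` preserves direct limits of systems of objects in the class `P`. -/
def HomPreservesDirectLimitsOf (P : C → Prop) (X : C) : Prop :=
  ∀ (J : Type v) [SmallCategory J] [IsFiltered J] (D : J ⥤ C),
    (∀ j : J, P (D.obj j)) →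
    ∀ (c : Cocone D), IsColimit c →
      Nonempty (IsColimit ((coyoneda.obj (op X)).mapCocone c))

section

variable {J : Type v} [SmallCategory J]

lemma exists_comp_ι_eq {D : J ⥤ C} {c : Cocone D} {X : C}
    (h : IsColimit ((coyoneda.obj (op X)).mapCocone c)) (f : X ⟶ c.pt) :
    ∃ (j : J) (g : X ⟶ D.obj j), g ≫ c.ι.app j = f :=
  Types.jointly_surjective_of_isColimit h f

variable [IsFiltered J]

lemma exists_comp_map_eq_zero [HasZeroMorphisms C] {D : J ⥤ C} {c : Cocone D} {X : C}
    (h : IsColimit ((coyoneda.obj (op X)).mapCocone c)) {j : J} (f : X ⟶ D.obj j)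
    (hf : f ≫ c.ι.app j = 0) :
    ∃ (k : J) (φ : j ⟶ k), f ≫ D.map φ = 0 := by
  obtain ⟨k, φ, hφ⟩ := (Types.FilteredColimit.isColimit_eq_iff' h f (0 : X ⟶ D.obj j)).1
    (show f ≫ c.ι.app j = 0 ≫ c.ι.app j by rw [hf, zero_comp])
  exact ⟨k, φ, hφ.trans zero_comp⟩

lemma nonempty_isColimit_coyoneda_mapCocone [Preadditive C] {D : J ⥤ C} {c : Cocone D} {X : C}
    (hsurj : ∀ f : X ⟶ c.pt, ∃ (j : J) (g : X ⟶ D.obj j), g ≫ c.ι.app j = f)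
    (hinj : ∀ (j : J) (f : X ⟶ D.obj j), f ≫ c.ι.app j = 0 →
      ∃ (k : J) (φ : j ⟶ k), f ≫ D.map φ = 0) :
    Nonempty (IsColimit ((coyoneda.obj (op X)).mapCocone c)) := by
  refine ⟨Types.FilteredColimit.isColimitOf' _ _ (fun f ↦ ?_) (fun j (f g : X ⟶ D.obj j) h ↦ ?_)⟩
  · obtain ⟨j, g, hg⟩ := hsurj f
    exact ⟨j, g, hg.symm⟩
  · obtain ⟨k, φ, hφ⟩ := hinj j (f - g) (by
      rw [Preadditive.sub_comp, sub_eq_zero]; exact h)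
    rw [Preadditive.sub_comp, sub_eq_zero] at hφ
    exact ⟨k, φ, hφ⟩

end

lemma CategoryTheory.ShortComplex.shortExact_of_evaluation {J : Type*} [Category* J] [Abelian C]
    {S : ShortComplex (J ⥤ C)}
    (hS : ∀ j, (S.map ((evaluation J C).obj j)).ShortExact) : S.ShortExact where
  exact := by
    rw [ShortComplex.exact_iff_isZero_homology, Functor.isZero_iff]
    intro j
    exact ((ShortComplex.exact_iff_isZero_homology _).1 (hS j).exact).of_iso
      (S.mapHomologyIso ((evaluation J C).obj j)).symm
  mono_f := by
    have : ∀ j, Mono (S.f.app j) := fun j ↦ (hS j).mono_f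
    exact NatTrans.mono_of_mono_app _
  epi_g := by
    have : ∀ j, Epi (S.g.app j) := fun j ↦ (hS j).epi_g
    exact NatTrans.epi_of_epi_app _

namespace CategoryTheory.ShortComplex.ShortExact

variable [Abelian C] [HasExt.{w} C] {M : C}

lemma mk₀_comp_extClass_eq_zero_iff {S : ShortComplex C} (hS : S.ShortExact) (g : M ⟶ S.X₃) :
    (Ext.mk₀ g).comp hS.extClass (zero_add 1) = 0 ↔ ∃ f : M ⟶ S.X₂, f ≫ S.g = g := by
  refine ⟨fun h ↦ ?_, ?_⟩
  · obtain ⟨x, hx⟩ := Ext.covariant_sequence_exact₃ _ hS _ _ h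
    obtain ⟨f, rfl⟩ := (Ext.mk₀_bijective _ _).2 x
    exact ⟨f, (Ext.mk₀_bijective _ _).1 (by rw [← hx, Ext.mk₀_comp_mk₀])⟩
  · rintro ⟨f, rfl⟩
    rw [← Ext.mk₀_comp_mk₀, Ext.comp_assoc_of_second_deg_zero, comp_extClass, Ext.comp_zero]

lemma mk₀_comp_extClass_comp_eq_zero_iff {S₁ S₂ : ShortComplex C} (hS₁ : S₁.ShortExact)
    (hS₂ : S₂.ShortExact) (τ : S₁ ⟶ S₂) (g : M ⟶ S₁.X₃) :
    ((Ext.mk₀ g).comp hS₁.extClass (zero_add 1)).comp (Ext.mk₀ τ.τ₁) (add_zero 1) = 0 ↔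
      ∃ f : M ⟶ S₂.X₂, f ≫ S₂.g = g ≫ τ.τ₃ := by
  rw [Ext.comp_assoc_of_third_deg_zero, extClass_naturality hS₁ hS₂ τ,
    ← Ext.comp_assoc_of_second_deg_zero, Ext.mk₀_comp_mk₀, mk₀_comp_extClass_eq_zero_iff]

end CategoryTheory.ShortComplex.ShortExact

namespace IsTorsionPair

variable [Abelian C] {T F : C → Prop}

lemma exists_shortExact_functor (h : IsTorsionPair T F) {J : Type*} [Category* J] (D : J ⥤ C) :
    ∃ (A B : J ⥤ C) (α : A ⟶ D) (β : D ⟶ B) (w : α ≫ β = 0),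
      (∀ j, T (A.obj j)) ∧ (∀ j, F (B.obj j)) ∧ (ShortComplex.mk α β w).ShortExact := by
  choose A B i p w hA hB hS using h.exists_seq
  have hi (X : C) : Mono (i X) := (hS X).mono_f
  have hp (X : C) : Epi (p X) := (hS X).epi_g
  have hmap {X Y : C} (f : X ⟶ Y) : ∃ (a : A X ⟶ A Y) (b : B X ⟶ B Y),
      a ≫ i Y = i X ≫ f ∧ p X ≫ b = f ≫ p Y := by
    have h₀ : i X ≫ f ≫ p Y = 0 := (h.torsion_iff _).1 (hA X) _ (hB Y) _
    exact ⟨(hS Y).exact.lift (i X ≫ f) (by simpa using h₀), (hS X).exact.desc (f ≫ p Y) h₀,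
      (hS Y).exact.lift_f _ _, (hS X).exact.g_desc _ _⟩
  choose a b ha hb using @hmap
  refine ⟨
    { obj j := A (D.obj j)
      map φ := a (D.map φ)
      map_id j := by simp [← cancel_mono (i _), ha]
      map_comp φ ψ := by simp [← cancel_mono (i _), ha, reassoc_of% ha] },
    { obj j := B (D.obj j)
      map φ := b (D.map φ)
      map_id j := by simp [← cancel_epi (p _), hb]
      map_comp φ ψ := by simp [← cancel_epi (p _), hb, reassoc_of% hb] },
    { app j := i (D.obj j)
      naturality _ _ φ := ha (D.map φ) },
    { app j := p (D.obj j)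
      naturality _ _ φ := (hb (D.map φ)).symm },
    by ext j; exact w _, fun j ↦ hA _, fun j ↦ hB _,
    ShortComplex.shortExact_of_evaluation fun j ↦ hS _⟩

end IsTorsionPair

theorem finitelyPresented_of_torsion_criteria
    [Abelian C] [HasColimits C] [AB5 C] [HasExt.{w} C]
    (hsep : ∃ G : C, IsSeparator G)
    (T F : C → Prop) (htp : IsTorsionPair T F)
    (hft : ClosedUnderDirectLimits F)
    (M : C)
    (h₁ : HomPreservesDirectLimitsOf T M)
    (h₂ : HomPreservesDirectLimitsOf F M)
    (h₃ : ∀ (J : Type v) [SmallCategory J] [IsFiltered J] (D : J ⥤ C),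
      (∀ j : J, T (D.obj j)) →
      ∀ (c : Cocone D), IsColimit c →
      ∀ (i : J) (e : Ext M (D.obj i) 1),
        e.comp (Ext.mk₀ (c.ι.app i)) (add_zero 1) = 0 →
        ∃ (j : J) (φ : i ⟶ j), e.comp (Ext.mk₀ (D.map φ)) (add_zero 1) = 0) :
    FinitelyPresented M := by
  intro J _ _ D c hc
  obtain ⟨hc⟩ := hc
  suffices Nonempty (IsColimit ((coyoneda.obj (op M)).mapCocone (colimit.cocone D))) by
    have := preservesColimit_of_preserves_colimit_cocone (colimit.isColimit D) this.some
    exact ⟨isColimitOfPreserves (coyoneda.obj (op M)) hc⟩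
  obtain ⟨A, B, α, β, w, hA, hB, hS⟩ := htp.exists_shortExact_functor D
  have hw (j : J) : α.app j ≫ β.app j = 0 := by simp [← NatTrans.comp_app, w]
  have hwc : colimMap α ≫ colimMap β = 0 := by ext; simp [reassoc_of% hw]
  have hSj (j : J) : (ShortComplex.mk (α.app j) (β.app j) (hw j)).ShortExact :=
    hS.map_of_exact ((evaluation J C).obj j)
  have hSc : (ShortComplex.mk (colimMap α) (colimMap β) hwc).ShortExact :=
    hS.map_of_exact (colim (J := J) (C := C))
  have hmono : Mono (colimMap α) := hSc.mono_f
  have hmono_app (j : J) : Mono (α.app j) := (hSj j).mono_f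
  obtain ⟨hcA⟩ := h₁ J A hA _ (colimit.isColimit A)
  obtain ⟨hcB⟩ := h₂ J B hB _ (colimit.isColimit B)
  apply nonempty_isColimit_coyoneda_mapCocone
  · intro (f : M ⟶ colimit D)
    obtain ⟨i, g, hg⟩ := exists_comp_ι_eq hcB (f ≫ colimMap β)
    dsimp at hg
    let τc : ShortComplex.mk (α.app i) (β.app i) (hw i) ⟶ ShortComplex.mk _ _ hwc :=
      ShortComplex.homMk (colimit.ι A i) (colimit.ι D i) (colimit.ι B i)
        (ι_colimMap α i) (ι_colimMap β i)
    obtain ⟨j, φ, hφ⟩ := h₃ J A hA _ (colimit.isColimit A) i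
      ((Ext.mk₀ g).comp (hSj i).extClass (zero_add 1))
      (((hSj i).mk₀_comp_extClass_comp_eq_zero_iff hSc τc g).2 ⟨f, hg.symm⟩)
    let τ : ShortComplex.mk (α.app i) (β.app i) (hw i) ⟶
        ShortComplex.mk (α.app j) (β.app j) (hw j) :=
      ShortComplex.homMk (A.map φ) (D.map φ) (B.map φ) (α.naturality φ) (β.naturality φ)
    obtain ⟨(l : M ⟶ D.obj j), (hl : l ≫ β.app j = g ≫ B.map φ)⟩ :=
      ((hSj i).mk₀_comp_extClass_comp_eq_zero_iff (hSj j) τ g).1 hφ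
    have hd : (f - l ≫ colimit.ι D j) ≫ colimMap β = 0 := by
      rw [Preadditive.sub_comp, Category.assoc, ι_colimMap, reassoc_of% hl, colimit.w, hg,
        sub_self]
    obtain ⟨d, hd⟩ : ∃ d, d ≫ colimMap α = f - l ≫ colimit.ι D j :=
      ⟨hSc.exact.lift _ hd, hSc.exact.lift_f _ _⟩
    obtain ⟨k, m, rfl⟩ := exists_comp_ι_eq hcA d
    dsimp at hd
    rw [Category.assoc, ι_colimMap] at hd
    refine ⟨IsFiltered.max j k, l ≫ D.map (IsFiltered.leftToMax j k) +
      m ≫ α.app k ≫ D.map (IsFiltered.rightToMax j k), ?_⟩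
    dsimp
    rw [Preadditive.add_comp]
    simp only [Category.assoc, colimit.w, hd]
    abel
  · intro i f hf
    dsimp at hf
    obtain ⟨j, φ, hφ⟩ := exists_comp_map_eq_zero hcB (f ≫ β.app i) (by
      dsimp
      rw [Category.assoc, ← ι_colimMap, reassoc_of% hf, zero_comp])
    rw [Category.assoc, ← β.naturality, ← Category.assoc] at hφ
    obtain ⟨g, hg⟩ : ∃ g, g ≫ α.app j = f ≫ D.map φ :=
      ⟨(hSj j).exact.lift _ hφ, (hSj j).exact.lift_f _ _⟩
    obtain ⟨k, ψ, hψ⟩ := exists_comp_map_eq_zero hcA g (by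
      dsimp
      rw [← cancel_mono (colimMap α), Category.assoc, ι_colimMap, reassoc_of% hg, colimit.w, hf,
        zero_comp])
    refine ⟨k, φ ≫ ψ, ?_⟩
    rw [D.map_comp, ← reassoc_of% hg, ← α.naturality, reassoc_of% hψ, zero_comp]
end
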